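/- Let ε > 0 and let λ : (0,∞) → (0,∞) satisfy lim_{t→∞} λ(t) = 0 and lim_{t→∞} (t + ln(λ(t)ε²)) = ∞. Define σ(λ,ε) := 1/cosh(ε√(2λ)) and v_σ(t) = e^{−t}/((1−σ) + σe^{−t}). Then lim_{t→∞} e^t λ(t) ε² v_{σ(λ(t),ε)}(t) = 1. -/

import Mathlib

/-- Lemma 5.1: if `λ(t) ↓ 0` and `t + ln(λ(t)ε²) → ∞`, then with
`σ(λ,ε) = sech(ε√(2λ))` and `v_σ(t) = e^{-t}/((1-σ) + σe^{-t})` one has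
`e^t λ(t) ε² v_{σ(λ(t),ε)}(t) → 1`. -/
theorem stmt6 (ε : ℝ) (hε : 0 < ε) (lam : ℝ → ℝ) (hpos : ∀ t > (0 : ℝ), 0 < lam t)
    (h0 : Filter.Tendsto lam Filter.atTop (nhds 0))
    (h1 : Filter.Tendsto (fun t => t + Real.log (lam t * ε ^ 2)) Filter.atTop Filter.atTop)
    (σ : ℝ → ℝ) (hσ : ∀ t, σ t = 1 / Real.cosh (ε * Real.sqrt (2 * lam t)))
    (v : ℝ → ℝ → ℝ)
    (hv : ∀ s u, v s u = Real.exp (-u) / ((1 - s) + s * Real.exp (-u))) :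
    Filter.Tendsto (fun t => Real.exp t * (lam t * ε ^ 2) * v (σ t) t)
      Filter.atTop (nhds 1) := by
  have hx : Filter.Tendsto (fun t => ε * Real.sqrt (2 * lam t)) Filter.atTop (nhds 0) := by
    have h2 : Filter.Tendsto (fun t => ε * Real.sqrt (2 * lam t)) Filter.atTop
        (nhds (ε * Real.sqrt (2 * 0))) := ((h0.const_mul 2).sqrt).const_mul ε
    simpa using h2
  have hy : Filter.Tendsto (fun t => ε * Real.sqrt (2 * lam t) / 2) Filter.atTop
      (nhdsWithin 0 {0}ᶜ) := by
    rw [tendsto_nhdsWithin_iff]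
    refine ⟨by simpa using hx.div_const 2, ?_⟩
    filter_upwards [Filter.eventually_gt_atTop 0] with t ht
    have := hpos t ht
    have h3 : 0 < ε * Real.sqrt (2 * lam t) / 2 := by positivity
    exact h3.ne'
  have hs : Filter.Tendsto (fun y : ℝ => y⁻¹ * Real.sinh y) (nhdsWithin 0 {0}ᶜ) (nhds 1) := by
    have := (Real.hasDerivAt_sinh 0).tendsto_slope_zero
    simpa using this
  have hσ1 : Filter.Tendsto σ Filter.atTop (nhds 1) := by
    have h4 := (Real.continuous_cosh.tendsto 0).comp hx
    rw [Real.cosh_zero] at h4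
    have h5 := h4.inv₀ one_ne_zero
    rw [inv_one] at h5
    refine h5.congr fun t => ?_
    simp [hσ]
  have he := Real.tendsto_exp_neg_atTop_nhds_zero.comp h1
  have hm := (hσ1.mul (((hs.comp hy).pow 2).add he)).inv₀ (by norm_num)
  rw [show ((1:ℝ) * (1 ^ 2 + 0))⁻¹ = 1 by norm_num] at hm
  refine Filter.Tendsto.congr' ?_ hm
  filter_upwards [Filter.eventually_gt_atTop 0] with t ht
  have hl := hpos t ht
  have ha : 0 < lam t * ε ^ 2 := by positivity
  have hE := Real.exp_pos t
  have hc := Real.cosh_pos (ε * Real.sqrt (2 * lam t))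
  have hcosh : Real.cosh (ε * Real.sqrt (2 * lam t))
      = 1 + 2 * Real.sinh (ε * Real.sqrt (2 * lam t) / 2) ^ 2 := by
    have h6 := Real.cosh_two_mul (ε * Real.sqrt (2 * lam t) / 2)
    rw [Real.cosh_sq, mul_div_cancel₀ _ (two_ne_zero)] at h6
    rw [h6]; ring
  have hy2 : (ε * Real.sqrt (2 * lam t) / 2) ^ 2 = lam t * ε ^ 2 / 2 := by
    rw [div_pow, mul_pow, Real.sq_sqrt (by positivity)]; ring
  have hexp : Real.exp (-(t + Real.log (lam t * ε ^ 2)))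
      = (Real.exp t)⁻¹ * (lam t * ε ^ 2)⁻¹ := by
    rw [Real.exp_neg, Real.exp_add, Real.exp_log ha, mul_inv]
  simp only [Function.comp_apply]
  rw [hv, hσ, Real.exp_neg t]
  rw [hexp, mul_pow, inv_pow, hy2, hcosh]
  generalize Real.sinh (ε * Real.sqrt (2 * lam t) / 2) = S
  generalize lam t * ε ^ 2 = a at *
  generalize Real.exp t = E at *
  have hS : 0 < 1 + 2 * S ^ 2 := by positivity
  have hd : 0 < 2 * S ^ 2 * E + 1 := by positivity
  have e1 : 1 / (1 + 2 * S ^ 2) * ((a / 2)⁻¹ * S ^ 2 + E⁻¹ * a⁻¹)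
      = (2 * S ^ 2 * E + 1) / ((1 + 2 * S ^ 2) * (a * E)) := by
    field_simp
  have e2 : 1 - 1 / (1 + 2 * S ^ 2) + 1 / (1 + 2 * S ^ 2) * E⁻¹
      = (2 * S ^ 2 * E + 1) / ((1 + 2 * S ^ 2) * E) := by
    field_simp
    ring
  first
    | rw [e1, e2]
    | (rw [mul_comm, ← mul_inv, e1, e2])
  field_simp
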